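/- Let p be an odd prime, let w ≥ 1, and let κ and κ′ be p-bar cores (bar-partitions admitting no p-bar removal). For every bar-partition λ with p-bar core κ and p-bar weight w there is a unique bar-partition Ψ(λ) with p-bar core κ′ and the same p-bar quotient as λ; the resulting map Ψ is a bijection from the set of bar-partitions with p-bar core κ and p-bar weight w onto the set of bar-partitions with p-bar core κ′ and p-bar weight w, and it satisfies sgn(Ψ(λ)) = sgn(κ)·sgn(κ′)·sgn(λ). In particular, Ψ preserves signs when sgn(κ) = sgn(κ′) and reverses them when sgn(κ) = −sgn(κ′). -/

import Mathlib

open scoped BigOperators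

/-- A bar-partition: a finite set of distinct positive parts. -/
structure BarPartition where
  parts : Finset ℕ
  zero_not_mem : 0 ∉ parts

namespace BarPartition

/-- The size `|λ|` of a bar-partition: the sum of its parts. -/
def size (l : BarPartition) : ℕ := ∑ a ∈ l.parts, a

/-- The length `ℓ(λ)` of a bar-partition: its number of parts. -/
def length (l : BarPartition) : ℕ := l.parts.card

/-- The sign `sgn(λ) = (-1)^(|λ| - ℓ(λ))` of a bar-partition. -/
def sgn (l : BarPartition) : ℤ := (-1) ^ (l.size - l.length)

/-- The empty bar-partition. -/
def empty : BarPartition := ⟨∅, by simp⟩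

end BarPartition

/-- One `t`-bar removal step: replace a part `a > t` by `a - t` (if `a - t` is not already a
part), delete a part equal to `t`, or delete two parts whose sum is `t`. -/
def BarRemoval (t : ℕ) (μ ν : BarPartition) : Prop :=
  (∃ a ∈ μ.parts, t < a ∧ a - t ∉ μ.parts ∧ ν.parts = insert (a - t) (μ.parts.erase a)) ∨
  (t ∈ μ.parts ∧ ν.parts = μ.parts.erase t) ∨
  (∃ a ∈ μ.parts, ∃ b ∈ μ.parts, a ≠ b ∧ a + b = t ∧ ν.parts = (μ.parts.erase a).erase b)

/-- A `t`-bar core: a bar-partition admitting no `t`-bar removal. -/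
def IsBarCore (t : ℕ) (κ : BarPartition) : Prop := ∀ ν, ¬ BarRemoval t κ ν

/-- `κ` is the `t`-bar core of `λ`: it is obtained from `λ` by a (maximal) sequence of `t`-bar
removals and admits no further removal. -/
def IsBarCoreOf (t : ℕ) (l κ : BarPartition) : Prop :=
  Relation.ReflTransGen (BarRemoval t) l κ ∧ IsBarCore t κ

/-- `λ` has empty `t`-bar core. -/
def HasEmptyBarCore (t : ℕ) (l : BarPartition) : Prop :=
  Relation.ReflTransGen (BarRemoval t) l BarPartition.empty

/-- The twisted runner at `r` (for `1 ≤ r ≤ (t-1)/2`) of the `t`-bar-abacus of `λ`, as a set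
of integers: position `i ≥ 0` (above the fence) carries a bead iff `t*i + r` is a part of `λ`,
and position `i < 0` (slot `j = -(i+1)` below the fence) carries a bead iff `t*j + (t - r)` is
*not* a part of `λ` (beads and empty slots of runner `t - r` are interchanged). -/
def twistedRunner (t r : ℕ) (l : BarPartition) : Set ℤ :=
  {i : ℤ | (0 ≤ i ∧ t * i.toNat + r ∈ l.parts) ∨
           (i < 0 ∧ t * (-(i + 1)).toNat + (t - r) ∉ l.parts)}

/-- Two bar-partitions have the same `t`-bar quotient: the runners `0` agree, and for each
`1 ≤ r ≤ (t-1)/2` the twisted runners differ by a shift (the shift by the unique balancing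
integer produces the Frobenius symbol of the quotient component, so shift-equivalent twisted
runners are exactly those with equal quotient component). -/
def HasSameBarQuotient (t : ℕ) (l m : BarPartition) : Prop :=
  (∀ k : ℕ, t * k ∈ l.parts ↔ t * k ∈ m.parts) ∧
  ∀ r : ℕ, 1 ≤ r → 2 * r < t →
    ∃ c : ℤ, twistedRunner t r m = (fun i => i + c) '' twistedRunner t r l

/-- `m` is the `t`-bar cocore of `l`: the unique bar-partition with empty `t`-bar core and the
same `t`-bar quotient as `l`. -/
def IsBarCocoreOf (t : ℕ) (l m : BarPartition) : Prop :=
  HasEmptyBarCore t m ∧ HasSameBarQuotient t l m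

/-- A fixed algebraic closure of `ℚ`. -/
abbrev Qbar := AlgebraicClosure ℚ

/-- `σ` is a `σ_p`-type automorphism of `ℚ̄`: it raises every root of unity of order coprime
to `p` to its `p`-th power, and fixes every root of unity of `p`-power order. -/
def IsSigmaPType (p : ℕ) (σ : Qbar ≃ₐ[ℚ] Qbar) : Prop :=
  (∀ (ζ : Qbar) (n : ℕ), 0 < n → Nat.Coprime n p → ζ ^ n = 1 → σ ζ = ζ ^ p) ∧
  (∀ (ζ : Qbar) (k : ℕ), ζ ^ (p ^ k) = 1 → σ ζ = ζ)

/-- The discriminant `D_λ` attached to a bar-partition `λ` of `n` with `k` parts: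
`2·(−1)^((n−k+1)/2)·λ₁⋯λ_k` if `n − k` is odd, and `(−1)^((n−k)/2)·λ₁⋯λ_k` if `n − k` is
even. -/
def barDisc (l : BarPartition) : ℤ :=
  if (l.size - l.length) % 2 = 1 then
    2 * (-1) ^ ((l.size - l.length + 1) / 2) * ∏ a ∈ l.parts, (a : ℤ)
  else
    (-1) ^ ((l.size - l.length) / 2) * ∏ a ∈ l.parts, (a : ℤ)

/-!
On the doubled abacus, where a negative position `-a` carries a bead exactly when `a` is not a part,
each of the three kinds of `t`-bar removal slides one bead from `n` to `n - t`, together with the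
mirror image of this move under `n ↦ -n`. A core is therefore a configuration in which every runner
is filled up to a threshold, its charge, and charges do not change under removals. Shifting the
runners of `λ` by the differences of the charges of `κ'` and `κ` leaves the twisted runners, hence
the quotient, the same up to shift; it carries `κ` to `κ'` and removals to removals, so it carries
`λ` to the required `Ψ(λ)`. Conversely, equality of quotients means that the abaci differ by such a
shift, and invariance of the charge determines it.

The parity of the number of parts not divisible by `t` is also invariant under
removals, whence `sgn λ = sgn κ * (-1) ^ (w + ℓ(λ⁰))`, where `ℓ(λ⁰)` depends only on the quotient.
-/

namespace BarPartition

open scoped symmDiff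

variable {t : ℕ} {c : ℤ → ℤ} {l l' m m' κ κ' : BarPartition} {n x : ℤ}

attribute [ext] BarPartition

lemma ne_zero_of_mem_parts {a : ℕ} (ha : a ∈ l.parts) : a ≠ 0 :=
  ne_of_mem_of_not_mem ha l.zero_not_mem

lemma le_size_of_mem_parts {a : ℕ} (ha : a ∈ l.parts) : a ≤ l.size :=
  Finset.single_le_sum (f := id) (fun _ _ => Nat.zero_le _) ha

lemma length_le_size (l : BarPartition) : l.length ≤ l.size := by
  simpa [length, size] using
    Finset.card_nsmul_le_sum l.parts id 1 fun a ha => Nat.pos_of_ne_zero (ne_zero_of_mem_parts ha)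

/-- The doubled abacus of a bar-partition: a bead at each part `a`, and at each negative integer
`-a` such that `a` is not a part. Position `0` is always empty. The residue classes `r` and `t - r`
modulo `t` then carry the twisted runner at `r` and its mirror image. -/
def beads (l : BarPartition) : Set ℤ :=
  {n | 0 < n ∧ n.natAbs ∈ l.parts ∨ n < 0 ∧ n.natAbs ∉ l.parts}

lemma mem_beads : n ∈ l.beads ↔ 0 < n ∧ n.natAbs ∈ l.parts ∨ n < 0 ∧ n.natAbs ∉ l.parts :=
  Iff.rfl

lemma zero_notMem_beads (l : BarPartition) : (0 : ℤ) ∉ l.beads := by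
  simp [mem_beads]

lemma natCast_mem_beads {a : ℕ} : (a : ℤ) ∈ l.beads ↔ a ∈ l.parts := by
  have := @ne_zero_of_mem_parts l a
  grind [mem_beads]

lemma neg_mem_beads (hn : n ≠ 0) : -n ∈ l.beads ↔ n ∉ l.beads := by
  grind [mem_beads]

lemma neg_natCast_mem_beads {a : ℕ} (ha : a ≠ 0) : -(a : ℤ) ∈ l.beads ↔ a ∉ l.parts := by
  rw [neg_mem_beads (Nat.cast_ne_zero.2 ha), natCast_mem_beads]

lemma beads_injective : Function.Injective beads := fun l m h => by
  ext a
  rw [← natCast_mem_beads, ← natCast_mem_beads, h]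

lemma le_size_of_mem_beads (hn : n ∈ l.beads) : n ≤ l.size := by
  have := @le_size_of_mem_parts l n.natAbs
  grind [mem_beads]

lemma mem_beads_of_lt_neg_size (hn : n < -l.size) : n ∈ l.beads := by
  have := @le_size_of_mem_parts l n.natAbs
  grind [mem_beads]

/-- Exchange bead and empty slot at each of the positions `x` and `-x` of the doubled abacus.
Flipping `0` has no effect. -/
def flip (l : BarPartition) (x : ℤ) : BarPartition :=
  ⟨(l.parts ∆ {x.natAbs}).erase 0, Finset.notMem_erase 0 _⟩

lemma mem_parts_flip {a : ℕ} :
    a ∈ (l.flip x).parts ↔ a ≠ 0 ∧ (a = x.natAbs ↔ a ∉ l.parts) := by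
  simp only [flip, Finset.mem_erase, Finset.mem_symmDiff, Finset.mem_singleton]
  tauto

lemma mem_beads_flip :
    n ∈ (l.flip x).beads ↔ n ≠ 0 ∧ ((n = x ∨ n = -x) ↔ n ∉ l.beads) := by
  rw [← Int.natAbs_eq_natAbs_iff]
  grind [mem_beads, mem_parts_flip]

lemma flip_flip (l : BarPartition) (x : ℤ) : (l.flip x).flip x = l := by
  ext a
  have := @ne_zero_of_mem_parts l a
  grind [mem_parts_flip]

lemma flip_comm (l : BarPartition) (x y : ℤ) : (l.flip x).flip y = (l.flip y).flip x := by
  ext a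
  grind [mem_parts_flip]

/-- Slide a bead of the doubled abacus from `n` down to `n - t`; by symmetry a bead moves from
`t - n` to `-n` as well. -/
def slide (t : ℕ) (l : BarPartition) (n : ℤ) : BarPartition :=
  (l.flip n).flip (n - t)

lemma slide_slide (t : ℕ) (l : BarPartition) (n : ℤ) : slide t (slide t l n) n = l := by
  rw [slide, slide, flip_comm _ (n - t) n, flip_flip, flip_flip]

lemma mem_parts_slide {a : ℕ} : a ∈ (slide t l n).parts ↔
    a ≠ 0 ∧ (a = (n - t).natAbs ↔ (a = n.natAbs ↔ a ∈ l.parts)) := by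
  grind [slide, mem_parts_flip]

lemma exists_slide_of_barRemoval (h : BarRemoval t l l') :
    ∃ n ∈ l.beads, n - t ∉ l.beads ∧ l' = slide t l n := by
  rcases h with ⟨a, ha, hta, hat, h⟩ | ⟨ha, h⟩ | ⟨a, ha, b, hb, hab, rfl, h⟩
  · refine ⟨a, natCast_mem_beads.2 ha, ?_, ?_⟩
    · rwa [← Nat.cast_sub hta.le, natCast_mem_beads]
    · ext x
      have := @ne_zero_of_mem_parts l x
      grind [mem_parts_slide]
  · refine ⟨t, natCast_mem_beads.2 ha, ?_, ?_⟩
    · simpa using zero_notMem_beads l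
    · ext x
      have := @ne_zero_of_mem_parts l x
      grind [mem_parts_slide]
  · have hn : (a : ℤ) - (a + b : ℕ) = -b := by push_cast; ring
    refine ⟨a, natCast_mem_beads.2 ha, ?_, ?_⟩
    · rwa [hn, neg_natCast_mem_beads (ne_zero_of_mem_parts hb), not_not]
    · ext x
      have := @ne_zero_of_mem_parts l x
      grind [mem_parts_slide]

lemma barRemoval_slide (ht : Odd t) (hn : n ∈ l.beads) (hnt : n - t ∉ l.beads) :
    BarRemoval t l (slide t l n) := by
  have h0 := @ne_zero_of_mem_parts l
  rcases lt_or_ge n 0 with hneg | hpos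
  · refine .inl ⟨(n - t).natAbs, ?_, ?_, ?_, ?_⟩
    · grind [mem_beads]
    · omega
    · grind [mem_beads]
    · ext x
      grind [mem_parts_slide, mem_beads]
  · obtain ⟨a, rfl⟩ := Int.eq_ofNat_of_zero_le hpos
    rw [natCast_mem_beads] at hn
    rcases lt_trichotomy a t with hat | rfl | hat
    · refine .inr (.inr ⟨a, hn, t - a, ?_, ?_, by omega, ?_⟩)
      · grind [mem_beads]
      · grind
      · ext x
        grind [mem_parts_slide, mem_beads]
    · refine .inr (.inl ⟨hn, ?_⟩)
      ext x
      grind [mem_parts_slide]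
    · refine .inl ⟨a, hn, hat, ?_, ?_⟩
      · rwa [← Nat.cast_sub hat.le, natCast_mem_beads] at hnt
      · ext x
        grind [mem_parts_slide, mem_beads]

lemma apply_add_mul_of_periodic {α : Type*} {f : ℤ → α} {a : ℤ} (hf : f.Periodic a) (x k : ℤ) :
    f (x + k * a) = f x :=
  hf.int_mul k x

lemma exists_sum_parts_eq_of_barRemoval {M : Type*} [AddCommGroup M] {f : ℤ → M} (hf0 : f 0 = 0)
    (hf : f.Odd) (h : BarRemoval t l l') :
    ∃ n, ∑ a ∈ l.parts, f a = ∑ a ∈ l'.parts, f a + (f n - f (n - t)) := by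
  rcases h with ⟨a, ha, hta, hat, h⟩ | ⟨ht, h⟩ | ⟨a, ha, b, hb, hab, rfl, h⟩
  · refine ⟨a, ?_⟩
    rw [h, Finset.sum_insert (by simp [hat]), ← Finset.sum_erase_add _ _ ha, Nat.cast_sub hta.le]
    abel
  · refine ⟨t, ?_⟩
    rw [h, sub_self, hf0, sub_zero, Finset.sum_erase_add _ _ ht]
  · refine ⟨a, ?_⟩
    have hb' : b ∈ l.parts.erase a := Finset.mem_erase.2 ⟨hab.symm, hb⟩
    have hn : (a : ℤ) - (a + b : ℕ) = -b := by push_cast; ring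
    rw [h, hn, hf, ← Finset.sum_erase_add _ _ ha, ← Finset.sum_erase_add _ _ hb']
    abel

lemma size_eq_add_of_barRemoval (h : BarRemoval t l l') : l.size = l'.size + t := by
  obtain ⟨n, hn⟩ := exists_sum_parts_eq_of_barRemoval (f := id) rfl (fun _ => rfl) h
  zify [size]
  simpa using hn

lemma sum_parts_eq_of_barRemoval {M : Type*} [AddCommGroup M] {f : ℤ → M} (hf0 : f 0 = 0)
    (hf : f.Odd) (hper : f.Periodic t) (h : BarRemoval t l l') :
    ∑ a ∈ l.parts, f a = ∑ a ∈ l'.parts, f a := by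
  obtain ⟨n, hn⟩ := exists_sum_parts_eq_of_barRemoval hf0 hf h
  rw [hn, hper.sub_eq, sub_self, add_zero]

lemma eq_of_isBarCoreOf {α : Type*} {F : BarPartition → α}
    (hF : ∀ l l', BarRemoval t l l' → F l = F l') (h : IsBarCoreOf t l κ) : F l = F κ := by
  obtain ⟨h, -⟩ := h
  induction h with
  | refl => rfl
  | tail _ h ih => rw [ih, hF _ _ h]

/-- The charge of the runner through `n` of the doubled abacus: the number of beads at positive
positions congruent to `n` modulo `t`, minus the number of empty slots at such negative positions.
It is the shift that balances the twisted runner. -/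
def charge (t : ℕ) (l : BarPartition) (n : ℤ) : ℤ :=
  (l.parts.filter fun a : ℕ => (a : ℤ) ≡ n [ZMOD t]).card -
    (l.parts.filter fun a : ℕ => (a : ℤ) ≡ -n [ZMOD t]).card

lemma charge_odd (t : ℕ) (l : BarPartition) : (charge t l).Odd := fun n => by
  simp only [charge, neg_neg, neg_sub]

lemma charge_periodic (t : ℕ) (l : BarPartition) : (charge t l).Periodic (t : ℤ) := fun n => by
  have hneg (a : ℤ) : a ≡ -(n + t) [ZMOD t] ↔ a ≡ -n [ZMOD t] := by
    simp [Int.ModEq]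
  have hpos (a : ℤ) : a ≡ n + t [ZMOD t] ↔ a ≡ n [ZMOD t] := by
    simp [Int.ModEq]
  simp only [charge, hneg, hpos]

lemma charge_eq_of_barRemoval (h : BarRemoval t l l') : charge t l = charge t l' := by
  funext n
  have hsum (l : BarPartition) : charge t l n = ∑ a ∈ l.parts,
      ((if (a : ℤ) ≡ n [ZMOD t] then 1 else 0) - if (a : ℤ) ≡ -n [ZMOD t] then 1 else 0) := by
    simp [charge, Finset.sum_sub_distrib]
  have hneg (x y : ℤ) : -x ≡ y [ZMOD t] ↔ x ≡ -y [ZMOD t] := by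
    rw [← Int.neg_modEq_neg, neg_neg]
  rw [hsum, hsum]
  refine sum_parts_eq_of_barRemoval (f := fun x =>
    (if x ≡ n [ZMOD t] then 1 else 0) - if x ≡ -n [ZMOD t] then 1 else 0) ?_ ?_ ?_ h
  · simp [← hneg 0]
  · intro x
    simp [hneg]
  · intro x
    simp only [Int.add_modulus_modEq_iff]

lemma charge_eq_of_isBarCoreOf (h : IsBarCoreOf t l κ) : charge t l = charge t κ :=
  eq_of_isBarCoreOf (fun _ _ => charge_eq_of_barRemoval) h

lemma mem_beads_sub_mul_of_isBarCore (ht : Odd t) (hκ : IsBarCore t κ) (hn : n ∈ κ.beads) (j : ℕ) :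
    n - j * t ∈ κ.beads := by
  induction j with
  | zero => simpa using hn
  | succ j ih =>
    by_contra h
    refine hκ _ (barRemoval_slide ht ih ?_)
    rwa [Nat.cast_succ, add_one_mul, ← sub_sub] at h

lemma exists_eq_Iio_of_isLowerSet {s : Set ℤ} (hs : IsLowerSet s) (hne : s.Nonempty)
    (hbdd : BddAbove s) : ∃ d, s = Set.Iio d := by
  refine ⟨sSup s + 1, Set.ext fun i => ⟨fun hi => ?_, fun hi => ?_⟩⟩
  · exact Int.lt_add_one_of_le (le_csSup hbdd hi)
  · exact hs (Int.le_of_lt_add_one hi) (Int.csSup_mem hne hbdd)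

lemma exists_threshold_of_isBarCore (ht : Odd t) (hκ : IsBarCore t κ) (r : ℤ) :
    ∃ d, ∀ i, r + i * t ∈ κ.beads ↔ i < d := by
  have ht0 : (0 : ℤ) < t := by exact_mod_cast ht.pos
  have hlower : IsLowerSet {i : ℤ | r + i * t ∈ κ.beads} := fun i j hji hi => by
    have h := mem_beads_sub_mul_of_isBarCore ht hκ hi (i - j).toNat
    rwa [Int.toNat_of_nonneg (by omega), show r + i * t - (i - j) * t = r + j * t by ring] at h
  have hne : {i : ℤ | r + i * t ∈ κ.beads}.Nonempty :=
    ⟨-(|r| + κ.size + 1), mem_beads_of_lt_neg_size (by nlinarith [le_abs_self r, abs_nonneg r])⟩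
  have hbdd : BddAbove {i : ℤ | r + i * t ∈ κ.beads} :=
    ⟨|r| + κ.size, fun i hi => by
      nlinarith [neg_abs_le r, abs_nonneg r, le_size_of_mem_beads hi]⟩
  obtain ⟨d, hd⟩ := exists_eq_Iio_of_isLowerSet hlower hne hbdd
  exact ⟨d, Set.ext_iff.1 hd⟩

lemma card_parts_modEq_of_threshold {s k : ℤ} (hs : 0 ≤ s) (hst : s < t)
    (hk : ∀ i ≥ 0, s + i * t ∈ l.beads ↔ i < k) :
    (l.parts.filter fun a : ℕ => (a : ℤ) ≡ s [ZMOD t]).card = k.toNat := by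
  have ht0 : (0 : ℤ) < t := hs.trans_lt hst
  have hnat {i : ℤ} (hi : 0 ≤ i) : ((s + i * t).toNat : ℤ) = s + i * t :=
    Int.toNat_of_nonneg (by positivity)
  rw [← sub_zero k, ← Int.card_Ico]
  refine (Finset.card_nbij (fun i => (s + i * t).toNat) (fun i hi => ?_) (fun i hi j hj h => ?_)
    fun a ha => ?_).symm
  · obtain ⟨hi0, hik⟩ := Finset.mem_Ico.1 hi
    refine Finset.mem_filter.2 ⟨?_, ?_⟩
    · rwa [← natCast_mem_beads, hnat hi0, hk i hi0]
    · rw [hnat hi0, Int.add_mul_modulus_modEq_iff]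
  · have h' := congrArg (Nat.cast : ℕ → ℤ) h
    rw [hnat (Finset.mem_Ico.1 hi).1, hnat (Finset.mem_Ico.1 hj).1] at h'
    exact mul_right_cancel₀ ht0.ne' (add_left_cancel h')
  · obtain ⟨ha, has⟩ := Finset.mem_filter.1 ha
    have has' : (a : ℤ) % t = s := by rwa [Int.ModEq, Int.emod_eq_of_lt hs hst] at has
    have hdiv : s + (a : ℤ) / t * t = a := has' ▸ Int.emod_add_ediv_mul _ _
    have ha0 : 0 ≤ (a : ℤ) / t := by positivity
    refine ⟨a / t, Finset.mem_Ico.2 ⟨ha0, ?_⟩, by simp [hdiv]⟩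
    rwa [← hk _ ha0, hdiv, natCast_mem_beads]

lemma charge_eq_of_threshold {r d : ℤ} (hr : 0 ≤ r) (hrt : r < t)
    (hd : ∀ i, r + i * t ∈ l.beads ↔ i < d) : charge t l r = d := by
  have ht0 : (0 : ℤ) < t := hr.trans_lt hrt
  rcases hr.eq_or_lt with rfl | hr0
  · have h0 : ¬(0 < d) := by simpa [zero_notMem_beads] using hd 0
    have h1 : -1 < d ↔ ¬(1 < d) := by
      rw [← hd, ← hd, ← neg_mem_beads (by omega)]
      simp
    have hd0 : d = 0 := by omega
    simp [charge, hd0]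
  · have hneg (a : ℤ) : a ≡ -r [ZMOD t] ↔ a ≡ t - r [ZMOD t] := by
      simp [Int.ModEq, sub_eq_add_neg]
    have hk (i : ℤ) (hi : i ≥ 0) : t - r + i * t ∈ l.beads ↔ i < -d := by
      have hpos : t - r + i * t ≠ 0 := by nlinarith
      rw [← not_iff_not, ← neg_mem_beads hpos,
        show -(t - r + i * t) = r + -(i + 1) * t by ring, hd]
      omega
    simp only [charge, hneg]
    rw [card_parts_modEq_of_threshold hr hrt fun i _ => hd i,
      card_parts_modEq_of_threshold (by omega) (by omega) hk]
    omega

lemma mem_beads_iff_of_isBarCore (ht : Odd t) (hκ : IsBarCore t κ) :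
    n ∈ κ.beads ↔ n / t < charge t κ n := by
  have ht0 : (0 : ℤ) < t := by exact_mod_cast ht.pos
  have hn : n % t + n / t * t = n := Int.emod_add_ediv_mul n t
  obtain ⟨d, hd⟩ := exists_threshold_of_isBarCore ht hκ (n % t)
  have hc : charge t κ n = charge t κ (n % t) := by
    conv_lhs => rw [← hn]
    exact apply_add_mul_of_periodic (charge_periodic t κ) _ _
  rw [hc, charge_eq_of_threshold (Int.emod_nonneg n ht0.ne') (Int.emod_lt_of_pos n ht0) hd, ← hd,
    hn]

lemma not_dvd_of_mem_parts_of_isBarCore (ht : Odd t) (hκ : IsBarCore t κ) {a : ℕ}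
    (ha : a ∈ κ.parts) : ¬t ∣ a := by
  rintro ⟨k, rfl⟩
  have h := mem_beads_sub_mul_of_isBarCore ht hκ (natCast_mem_beads.2 ha) k
  rw [Nat.cast_mul, mul_comm, sub_self] at h
  exact zero_notMem_beads κ h

lemma neg_one_pow_card_parts_not_dvd_of_barRemoval (h : BarRemoval t l l') :
    (-1 : ℤ) ^ (l.parts.filter fun a => ¬t ∣ a).card =
      (-1) ^ (l'.parts.filter fun a => ¬t ∣ a).card := by
  have hsum := sum_parts_eq_of_barRemoval (M := ZMod 2) (f := fun x => if (t : ℤ) ∣ x then 0 else 1)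
    (if_pos (dvd_zero _)) (fun x => by simp [ZMod.neg_eq_self_mod_two, apply_ite])
    (fun x => by simp) h
  have hcard (l : BarPartition) : ∑ a ∈ l.parts, (if (t : ℤ) ∣ a then (0 : ZMod 2) else 1) =
      ((l.parts.filter fun a => ¬t ∣ a).card : ZMod 2) := by
    simp [Finset.sum_ite, Int.natCast_dvd_natCast]
  rw [hcard, hcard, ZMod.natCast_eq_natCast_iff'] at hsum
  rw [neg_one_pow_eq_pow_mod_two, hsum, ← neg_one_pow_eq_pow_mod_two]

lemma sgn_eq_neg_one_pow (t : ℕ) (l : BarPartition) :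
    l.sgn = (-1) ^ l.size * (-1) ^ (l.parts.filter fun a => t ∣ a).card *
      (-1) ^ (l.parts.filter fun a => ¬t ∣ a).card := by
  obtain ⟨k, hk⟩ := Nat.exists_eq_add_of_le l.length_le_size
  rw [mul_assoc, ← pow_add, Finset.card_filter_add_card_filter_not, ← length, sgn, hk,
    Nat.add_sub_cancel_left, pow_add, mul_right_comm, ← mul_pow, neg_one_mul, neg_neg, one_pow,
    one_mul]

lemma sgn_eq_of_isBarCoreOf (ht : Odd t) (h : IsBarCoreOf t l κ) {w : ℕ}
    (hw : l.size = κ.size + t * w) :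
    l.sgn = κ.sgn * (-1) ^ (w + (l.parts.filter fun a => t ∣ a).card) := by
  have hκ : (κ.parts.filter fun a => t ∣ a).card = 0 :=
    Finset.card_eq_zero.2 <| Finset.filter_eq_empty_iff.2 fun a =>
      not_dvd_of_mem_parts_of_isBarCore ht h.2
  have hnd := eq_of_isBarCoreOf (fun _ _ => neg_one_pow_card_parts_not_dvd_of_barRemoval) h
  rw [sgn_eq_neg_one_pow t l, sgn_eq_neg_one_pow t κ, hκ, hnd, hw]
  simp only [pow_add, pow_mul, ht.neg_one_pow, pow_zero]
  ring

/-- The bar-partition `m` is obtained from `l` by shifting the runner through each position `n` of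
the doubled abacus by `c n` slots. The shift depends only on the runner and respects the reflection
`n ↦ -n`. -/
structure IsRunnerShift (t : ℕ) (c : ℤ → ℤ) (l m : BarPartition) : Prop where
  periodic : c.Periodic t
  odd : c.Odd
  mem_beads_iff (n : ℤ) : n + c n * t ∈ m.beads ↔ n ∈ l.beads

namespace IsRunnerShift

lemma symm (h : IsRunnerShift t c l m) : IsRunnerShift t (-c) m l where
  periodic := h.periodic.comp Neg.neg
  odd n := congrArg Neg.neg (h.odd n)
  mem_beads_iff n := by
    rw [← h.mem_beads_iff, apply_add_mul_of_periodic h.periodic]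
    simp

lemma right_unique (h : IsRunnerShift t c l m) (h' : IsRunnerShift t c l m') : m = m' := by
  refine beads_injective (Set.ext fun n => ?_)
  rw [← h.symm.mem_beads_iff, h'.symm.mem_beads_iff]

lemma add_mul_inj (h : IsRunnerShift t c l m) : n + c n * t = x + c x * t ↔ n = x := by
  have hinv : Function.LeftInverse (fun y => y - c y * t) fun y => y + c y * t := fun y => by
    simp [apply_add_mul_of_periodic h.periodic]
  exact hinv.injective.eq_iff

lemma flip (h : IsRunnerShift t c l m) (x : ℤ) :
    IsRunnerShift t c (l.flip x) (m.flip (x + c x * t)) where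
  periodic := h.periodic
  odd := h.odd
  mem_beads_iff n := by
    have h0 : n + c n * t = 0 ↔ n = 0 := by
      simpa [h.odd.map_zero] using h.add_mul_inj (n := n) (x := 0)
    have hneg : -(x + c x * t) = -x + c (-x) * t := by
      rw [h.odd, neg_mul, neg_add]
    rw [mem_beads_flip, mem_beads_flip, hneg, h.add_mul_inj, h.add_mul_inj, h.mem_beads_iff,
      ne_eq, h0]

lemma slide (h : IsRunnerShift t c l m) (n : ℤ) :
    IsRunnerShift t c (slide t l n) (slide t m (n + c n * t)) := by
  have hn : n + c n * t - t = n - t + c (n - t) * t := by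
    rw [h.periodic.sub_eq]
    ring
  rw [BarPartition.slide, BarPartition.slide, hn]
  exact (h.flip n).flip (n - t)

lemma mem_beads_sub_iff (h : IsRunnerShift t c l m) (n : ℤ) :
    n + c n * t - t ∈ m.beads ↔ n - t ∈ l.beads := by
  rw [← h.mem_beads_iff, h.periodic.sub_eq, sub_add_eq_add_sub]

lemma exists_barRemoval_of_source (ht : Odd t) (h : IsRunnerShift t c l m)
    (hl : BarRemoval t l l') :
    ∃ m', BarRemoval t m m' ∧ IsRunnerShift t c l' m' := by
  obtain ⟨n, hn, hnt, rfl⟩ := exists_slide_of_barRemoval hl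
  exact ⟨_, barRemoval_slide ht ((h.mem_beads_iff n).2 hn) (mt (h.mem_beads_sub_iff n).1 hnt),
    h.slide n⟩

lemma exists_barRemoval_of_target (ht : Odd t) (h : IsRunnerShift t c l' m')
    (hl : BarRemoval t l l') :
    ∃ m, BarRemoval t m m' ∧ IsRunnerShift t c l m := by
  obtain ⟨n, hn, hnt, rfl⟩ := exists_slide_of_barRemoval hl
  have hm := h.slide n
  rw [slide_slide] at hm
  refine ⟨_, ?_, hm⟩
  have := barRemoval_slide ht ((hm.mem_beads_iff n).2 hn) (mt (hm.mem_beads_sub_iff n).1 hnt)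
  rwa [slide_slide] at this

lemma isBarCore (ht : Odd t) (h : IsRunnerShift t c l m) (hl : IsBarCore t l) : IsBarCore t m :=
  fun _ hm =>
    let ⟨_, hl', _⟩ := h.symm.exists_barRemoval_of_source ht hm
    hl _ hl'

lemma of_isBarCore (ht : Odd t) (hκ : IsBarCore t κ) (hκ' : IsBarCore t κ') :
    IsRunnerShift t (charge t κ' - charge t κ) κ κ' where
  periodic := (charge_periodic t κ').sub (charge_periodic t κ)
  odd n := by
    rw [Pi.sub_apply, Pi.sub_apply, charge_odd, charge_odd]
    ring
  mem_beads_iff n := by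
    rw [mem_beads_iff_of_isBarCore ht hκ', mem_beads_iff_of_isBarCore ht hκ,
      apply_add_mul_of_periodic (charge_periodic t κ'),
      Int.add_mul_ediv_right _ _ (by exact_mod_cast ht.pos.ne'), Pi.sub_apply]
    omega

lemma eq_charge_sub_of_isBarCore (ht : Odd t) (h : IsRunnerShift t c κ κ') (hκ : IsBarCore t κ) :
    c = charge t κ' - charge t κ := by
  have ht0 : (t : ℤ) ≠ 0 := by exact_mod_cast ht.pos.ne'
  have hκ' := h.isBarCore ht hκ
  funext n
  have hi (i : ℤ) : n / t + i + c n < charge t κ' n ↔ n / t + i < charge t κ n := by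
    have := h.mem_beads_iff (n + i * t)
    rwa [mem_beads_iff_of_isBarCore ht hκ', mem_beads_iff_of_isBarCore ht hκ,
      apply_add_mul_of_periodic h.periodic, apply_add_mul_of_periodic (charge_periodic t κ'),
      apply_add_mul_of_periodic (charge_periodic t κ'),
      apply_add_mul_of_periodic (charge_periodic t κ), Int.add_mul_ediv_right _ _ ht0,
      Int.add_mul_ediv_right _ _ ht0] at this
  have h₁ := hi (charge t κ n - n / t)
  have h₂ := hi (charge t κ n - n / t - 1)
  rw [Pi.sub_apply]
  omega

lemma exists_isBarCoreOf (ht : Odd t) (h : IsRunnerShift t c l m) (hl : IsBarCoreOf t l κ) :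
    ∃ κ', IsBarCoreOf t m κ' ∧ IsRunnerShift t c κ κ' := by
  obtain ⟨hred, hκ⟩ := hl
  induction hred using Relation.ReflTransGen.head_induction_on generalizing m with
  | refl => exact ⟨m, ⟨.refl, h.isBarCore ht hκ⟩, h⟩
  | head hrem _ ih =>
    obtain ⟨m', hm', h'⟩ := h.exists_barRemoval_of_source ht hrem
    obtain ⟨κ', ⟨hred', hκ'⟩, hshift⟩ := ih h'
    exact ⟨κ', ⟨.head hm' hred', hκ'⟩, hshift⟩

lemma exists_reflTransGen_barRemoval (ht : Odd t) (h : IsRunnerShift t c κ κ')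
    (hl : Relation.ReflTransGen (BarRemoval t) l κ) :
    ∃ m, Relation.ReflTransGen (BarRemoval t) m κ' ∧ IsRunnerShift t c l m ∧
      m.size + κ.size = l.size + κ'.size := by
  induction hl using Relation.ReflTransGen.head_induction_on with
  | refl => exact ⟨κ', .refl, h, add_comm _ _⟩
  | head hrem _ ih =>
    obtain ⟨m', hred, hshift, hsize⟩ := ih
    obtain ⟨m, hm, hshift'⟩ := hshift.exists_barRemoval_of_target ht hrem
    refine ⟨m, .head hm hred, hshift', ?_⟩
    rw [size_eq_add_of_barRemoval hm, size_eq_add_of_barRemoval hrem]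
    omega

lemma eq_charge_sub (ht : Odd t) (h : IsRunnerShift t c l m) (hl : IsBarCoreOf t l κ) :
    c = charge t m - charge t l := by
  obtain ⟨κ', hm, h'⟩ := h.exists_isBarCoreOf ht hl
  rw [charge_eq_of_isBarCoreOf hm, charge_eq_of_isBarCoreOf hl]
  exact h'.eq_charge_sub_of_isBarCore ht hl.2

end IsRunnerShift

lemma mem_twistedRunner_iff {r : ℕ} (hrt : r < t) {i : ℤ} :
    i ∈ twistedRunner t r l ↔ r + i * t ∈ l.beads := by
  rcases lt_or_ge i 0 with hi | hi
  · have hn : (r : ℤ) + i * t = -((t * (-(i + 1)).toNat + (t - r) : ℕ) : ℤ) := by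
      push_cast [Int.toNat_of_nonneg (show 0 ≤ -(i + 1) by omega), hrt.le]
      ring
    rw [hn, neg_natCast_mem_beads (by omega)]
    simp [twistedRunner, hi, hi.not_ge]
  · have hn : (r : ℤ) + i * t = ((t * i.toNat + r : ℕ) : ℤ) := by
      push_cast [Int.toNat_of_nonneg hi]
      ring
    rw [hn, natCast_mem_beads]
    simp [twistedRunner, hi, hi.not_gt]

lemma twistedRunner_eq_image_add_iff {r : ℕ} (hrt : r < t) (d : ℤ) :
    twistedRunner t r m = (fun i => i + d) '' twistedRunner t r l ↔
      ∀ i : ℤ, r + i * t + d * t ∈ m.beads ↔ r + i * t ∈ l.beads := by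
  have himage : (fun i => i + d) '' twistedRunner t r l = (· + -d) ⁻¹' twistedRunner t r l := by
    simp
  simp only [Set.ext_iff, himage, Set.mem_preimage, mem_twistedRunner_iff hrt]
  rw [← (Equiv.addRight d).forall_congr_right]
  simp [add_mul, add_assoc]

lemma IsRunnerShift.hasSameBarQuotient (h : IsRunnerShift t c l m) : HasSameBarQuotient t l m := by
  refine ⟨fun k => ?_, fun r _ hrt => ⟨c r, ?_⟩⟩
  · have hc : c (t * k) = 0 := by
      simpa [h.odd.map_zero, mul_comm] using apply_add_mul_of_periodic h.periodic 0 k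
    simpa [hc, ← natCast_mem_beads] using (h.mem_beads_iff (t * k)).symm
  · rw [twistedRunner_eq_image_add_iff (by omega)]
    intro i
    simpa [apply_add_mul_of_periodic h.periodic] using h.mem_beads_iff (r + i * t)

lemma neg_bmod_of_odd (ht : Odd t) (n : ℤ) : (-n).bmod t = -n.bmod t := by
  rw [Int.neg_bmod]
  split_ifs with h
  · have hcop : IsCoprime (t : ℤ) 2 := by exact_mod_cast ht.coprime_two_right.isCoprime
    have h0 : n.bmod t = 0 := Int.bmod_eq_zero_of_dvd (hcop.dvd_of_dvd_mul_left h)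
    rw [h0, neg_zero]
  · rfl

/-- The odd `t`-periodic function on the integers with value `d r` at each `1 ≤ r ≤ (t - 1) / 2`,
for odd `t`. -/
def oddPeriodicExtension (t : ℕ) (d : ℕ → ℤ) (n : ℤ) : ℤ :=
  (n.bmod t).sign * d (n.bmod t).natAbs

lemma oddPeriodicExtension_periodic (t : ℕ) (d : ℕ → ℤ) :
    (oddPeriodicExtension t d).Periodic t := fun n => by
  simp [oddPeriodicExtension]

lemma oddPeriodicExtension_odd (ht : Odd t) (d : ℕ → ℤ) : (oddPeriodicExtension t d).Odd :=
  fun n => by simp [oddPeriodicExtension, neg_bmod_of_odd ht]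

lemma isRunnerShift_of_bmod_nonneg (ht : Odd t) (hper : c.Periodic t) (hodd : c.Odd)
    (h : ∀ n : ℤ, 0 ≤ n.bmod t → (n + c n * t ∈ m.beads ↔ n ∈ l.beads)) :
    IsRunnerShift t c l m := by
  refine ⟨hper, hodd, fun n => ?_⟩
  rcases le_total 0 (n.bmod t) with hn | hn
  · exact h n hn
  rcases eq_or_ne n 0 with rfl | hn0
  · simp [hodd.map_zero, zero_notMem_beads]
  have hshift : n + c n * t ≠ 0 := fun h0 => by
    have hc : c n = 0 := by
      rw [← apply_add_mul_of_periodic hper n (c n), h0, hodd.map_zero]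
    exact hn0 (by simpa [hc] using h0)
  have hneg := h (-n) (by rw [neg_bmod_of_odd ht]; omega)
  rwa [hodd, neg_mul, ← neg_add, neg_mem_beads hshift, neg_mem_beads hn0, not_iff_not] at hneg

lemma mem_beads_iff_of_dvd (h : HasSameBarQuotient t l m) (hn : (t : ℤ) ∣ n) :
    n ∈ m.beads ↔ n ∈ l.beads := by
  have hparts : n.natAbs ∈ l.parts ↔ n.natAbs ∈ m.parts := by
    obtain ⟨k, hk⟩ := Int.natCast_dvd.1 hn
    rw [hk, h.1]
  simp only [mem_beads, hparts]

lemma exists_isRunnerShift_of_hasSameBarQuotient (ht : Odd t) (h : HasSameBarQuotient t l m) :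
    ∃ c, IsRunnerShift t c l m := by
  choose! d hd using h.2
  refine ⟨oddPeriodicExtension t d, isRunnerShift_of_bmod_nonneg ht
    (oddPeriodicExtension_periodic t d) (oddPeriodicExtension_odd ht d) fun n hn => ?_⟩
  rcases hn.eq_or_lt with hn0 | hpos
  · rw [oddPeriodicExtension, ← hn0, Int.sign_zero, zero_mul, zero_mul, add_zero]
    exact mem_beads_iff_of_dvd h (Int.dvd_of_bmod_eq_zero hn0.symm)
  · have hlt : 2 * (n.bmod t).natAbs < t := by
      have := Int.bmod_lt (x := n) ht.pos
      have := Nat.odd_iff.1 ht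
      omega
    have hrunner := (twistedRunner_eq_image_add_iff (by omega) _).1
      (hd (n.bmod t).natAbs (by omega) hlt) (n.bdiv t)
    rw [Int.natAbs_of_nonneg hn, Int.bmod_add_bdiv'] at hrunner
    rwa [oddPeriodicExtension, Int.sign_eq_one_of_pos hpos, one_mul]

lemma hasSameBarQuotient_iff (ht : Odd t) :
    HasSameBarQuotient t l m ↔ ∃ c, IsRunnerShift t c l m :=
  ⟨exists_isRunnerShift_of_hasSameBarQuotient ht, fun ⟨_, h⟩ => h.hasSameBarQuotient⟩

lemma hasSameBarQuotient_symm (ht : Odd t) (h : HasSameBarQuotient t l m) :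
    HasSameBarQuotient t m l :=
  let ⟨_, hc⟩ := (hasSameBarQuotient_iff ht).1 h
  hc.symm.hasSameBarQuotient

lemma card_parts_dvd_eq_of_hasSameBarQuotient (h : HasSameBarQuotient t l m) :
    (l.parts.filter fun a => t ∣ a).card = (m.parts.filter fun a => t ∣ a).card := by
  congr 1
  ext a
  simp only [Finset.mem_filter, and_congr_left_iff]
  rintro ⟨k, rfl⟩
  exact h.1 k

theorem exists_isBarCoreOf_hasSameBarQuotient (ht : Odd t) (hl : IsBarCoreOf t l κ)
    (hκ' : IsBarCore t κ') :
    ∃ m, IsBarCoreOf t m κ' ∧ HasSameBarQuotient t l m ∧ m.size + κ.size = l.size + κ'.size := by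
  obtain ⟨m, hred, hshift, hsize⟩ :=
    (IsRunnerShift.of_isBarCore ht hl.2 hκ').exists_reflTransGen_barRemoval ht hl.1
  exact ⟨m, ⟨hred, hκ'⟩, hshift.hasSameBarQuotient, hsize⟩

theorem eq_of_hasSameBarQuotient (ht : Odd t) (hl : IsBarCoreOf t l κ)
    (hm : IsBarCoreOf t m κ') (hm' : IsBarCoreOf t m' κ') (h : HasSameBarQuotient t l m)
    (h' : HasSameBarQuotient t l m') : m = m' := by
  obtain ⟨c, hc⟩ := (hasSameBarQuotient_iff ht).1 h
  obtain ⟨c', hc'⟩ := (hasSameBarQuotient_iff ht).1 h'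
  have hcc' : c = c' := by
    rw [hc.eq_charge_sub ht hl, hc'.eq_charge_sub ht hl, charge_eq_of_isBarCoreOf hm,
      charge_eq_of_isBarCoreOf hm']
  subst hcc'
  exact hc.right_unique hc'

theorem sgn_eq_of_hasSameBarQuotient (ht : Odd t) (hl : IsBarCoreOf t l κ)
    (hm : IsBarCoreOf t m κ') {w : ℕ} (hlw : l.size = κ.size + t * w)
    (hmw : m.size = κ'.size + t * w) (h : HasSameBarQuotient t l m) :
    m.sgn = κ.sgn * κ'.sgn * l.sgn := by
  have hκ : κ.sgn * κ.sgn = 1 := by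
    rw [sgn, ← mul_pow, neg_one_mul, neg_neg, one_pow]
  rw [sgn_eq_of_isBarCoreOf ht hl hlw, sgn_eq_of_isBarCoreOf ht hm hmw,
    card_parts_dvd_eq_of_hasSameBarQuotient h]
  linear_combination -κ'.sgn * (-1) ^ (w + (m.parts.filter fun a => t ∣ a).card) * hκ

end BarPartition

open BarPartition in
theorem barCore_replacement_bijection_general (t : ℕ) (ht : Odd t) (w : ℕ)
    (κ κ' : BarPartition) (hκ : IsBarCore t κ) (hκ' : IsBarCore t κ') :
    ∃ Ψ : {l : BarPartition // IsBarCoreOf t l κ ∧ l.size = κ.size + t * w} →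
        {m : BarPartition // IsBarCoreOf t m κ' ∧ m.size = κ'.size + t * w},
      Function.Bijective Ψ ∧
      ∀ l : {l : BarPartition // IsBarCoreOf t l κ ∧ l.size = κ.size + t * w},
        HasSameBarQuotient t l.1 (Ψ l).1 ∧
        (∀ m : BarPartition, IsBarCoreOf t m κ' → HasSameBarQuotient t l.1 m →
          m = (Ψ l).1) ∧
        (Ψ l).1.sgn = κ.sgn * κ'.sgn * l.1.sgn := by
  have hex {κ κ' : BarPartition} (hκ' : IsBarCore t κ')
      (l : {l : BarPartition // IsBarCoreOf t l κ ∧ l.size = κ.size + t * w}) :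
      ∃ m : {m : BarPartition // IsBarCoreOf t m κ' ∧ m.size = κ'.size + t * w},
        HasSameBarQuotient t l.1 m.1 := by
    obtain ⟨l, hl, hlw⟩ := l
    obtain ⟨m, hm, hquot, hsize⟩ := exists_isBarCoreOf_hasSameBarQuotient ht hl hκ'
    exact ⟨⟨m, hm, by omega⟩, hquot⟩
  choose Ψ hΨ using hex hκ' (κ := κ)
  refine ⟨Ψ, ⟨fun l l' h => ?_, fun m => ?_⟩, fun l => ⟨hΨ l, fun m hm hquot => ?_, ?_⟩⟩
  · exact Subtype.ext <| eq_of_hasSameBarQuotient ht (Ψ l).2.1 l.2.1 l'.2.1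
      (hasSameBarQuotient_symm ht (hΨ l)) (hasSameBarQuotient_symm ht (h ▸ hΨ l'))
  · obtain ⟨l, hl⟩ := hex hκ m
    exact ⟨l, Subtype.ext <| eq_of_hasSameBarQuotient ht l.2.1 (Ψ l).2.1 m.2.1 (hΨ l)
      (hasSameBarQuotient_symm ht hl)⟩
  · exact eq_of_hasSameBarQuotient ht l.2.1 hm (Ψ l).2.1 hquot (hΨ l)
  · exact sgn_eq_of_hasSameBarQuotient ht l.2.1 (Ψ l).2.1 l.2.2 (Ψ l).2.2 (hΨ l)

/-- Let `p` be an odd prime, `w ≥ 1`, and let `κ`, `κ′` be `p`-bar cores.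
For every bar-partition `λ` with `p`-bar core `κ` and `p`-bar weight `w` there is a unique
bar-partition `Ψ(λ)` with `p`-bar core `κ′` and the same `p`-bar quotient as `λ`; the
resulting map `Ψ` is a bijection between the two sets of bar-partitions (with cores `κ`,
resp. `κ′`, and weight `w`), and `sgn(Ψ(λ)) = sgn(κ)·sgn(κ′)·sgn(λ)`. -/
theorem barCore_replacement_bijection (p : ℕ) (hp : p.Prime) (hpodd : Odd p)
    (w : ℕ) (hw : 1 ≤ w)
    (κ κ' : BarPartition) (hκ : IsBarCore p κ) (hκ' : IsBarCore p κ') :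
    ∃ Ψ : {l : BarPartition // IsBarCoreOf p l κ ∧ l.size = κ.size + p * w} →
        {m : BarPartition // IsBarCoreOf p m κ' ∧ m.size = κ'.size + p * w},
      Function.Bijective Ψ ∧
      ∀ l : {l : BarPartition // IsBarCoreOf p l κ ∧ l.size = κ.size + p * w},
        HasSameBarQuotient p l.1 (Ψ l).1 ∧
        (∀ m : BarPartition, IsBarCoreOf p m κ' → HasSameBarQuotient p l.1 m →
          m = (Ψ l).1) ∧
        (Ψ l).1.sgn = κ.sgn * κ'.sgn * l.1.sgn :=
  barCore_replacement_bijection_general p hpodd w κ κ' hκ hκ'
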